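/- The sequence (τ_n)_{n∈ℕ} is strictly increasing until reaching ∞, i.e. if τ_n < ∞ then τ_{n+1} > τ_n, and the sequence (τ_n) has no finite accumulation point. -/

import Mathlib

/-!
STATEMENT 0: For the sequence (τ_n) defined from a continuous path w (with w(0)=0) and a
displacement μ>0 by τ_0 = 0, τ_{n+1} = Γ_{τ_n} for n even, τ_{n+1} = Ψ_{τ_n} for n odd
(and τ_{n+1} = ∞ once τ_n = ∞), where
Γ_s = inf{t ≥ s : w(t) = w_*(s,t) + μ} and Ψ_s = inf{t ≥ s : w(t) = w^*(s,t) − μ}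
(with inf ∅ = ∞): the sequence is strictly increasing until reaching ∞, and has no finite
accumulation point.
-/

noncomputable section

open Set Filter Topology ENNReal

namespace LOB

/-- running maximum `w^*(s,t)` of `w` on `[s,t]`. -/
def wsup (w : ℝ → ℝ) (s t : ℝ) : ℝ := sSup (w '' Set.Icc s t)

/-- running minimum `w_*(s,t)` of `w` on `[s,t]`. -/
def winf (w : ℝ → ℝ) (s t : ℝ) : ℝ := sInf (w '' Set.Icc s t)

/-- `Γ_s = inf{t ≥ s : w(t) = w_*(s,t) + μ}`, with values in `ℝ≥0∞` and `inf ∅ = ∞`. -/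
def Gam (μ : ℝ) (w : ℝ → ℝ) (s : ℝ) : ℝ≥0∞ :=
  sInf {t : ℝ≥0∞ | ∃ r : ℝ, s ≤ r ∧ t = ENNReal.ofReal r ∧ w r = winf w s r + μ}

/-- `Ψ_s = inf{t ≥ s : w(t) = w^*(s,t) − μ}`, with values in `ℝ≥0∞` and `inf ∅ = ∞`. -/
def Psi (μ : ℝ) (w : ℝ → ℝ) (s : ℝ) : ℝ≥0∞ :=
  sInf {t : ℝ≥0∞ | ∃ r : ℝ, s ≤ r ∧ t = ENNReal.ofReal r ∧ w r = wsup w s r - μ}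

/-- the sequence `τ_0 = 0`, `τ_{n+1} = Γ_{τ_n}` (n even), `τ_{n+1} = Ψ_{τ_n}` (n odd),
with `τ_{n+1} = ∞` as soon as `τ_n = ∞`. -/
def tauSeq (μ : ℝ) (w : ℝ → ℝ) : ℕ → ℝ≥0∞
  | 0 => 0
  | n + 1 =>
    if tauSeq μ w n = ⊤ then ⊤
    else if Even n then Gam μ w (tauSeq μ w n).toReal
    else Psi μ w (tauSeq μ w n).toReal

end LOB

open LOB

/-!
Near a time `a` the path stays within `μ / 2` of `w a`, so it can neither rise nor drop by `μ`
there: from any starting time close to `a`, both `Γ` and `Ψ` lie beyond `a`. Taking `a = τ_n` gives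
`τ_n < τ_{n+1}`. Hence `τ` increases to a limit, and a finite limit `a` would be overshot as soon as
`τ` gets close to it, so the limit is `∞`.
-/

theorem tendsto_nhds_top_of_monotone_of_eventually_lt_succ {α : Type*} [CompleteLattice α]
    [TopologicalSpace α] [SupConvergenceClass α] {u : ℕ → α} (hu : Monotone u)
    (h : ∀ a ≠ ⊤, ∀ᶠ b in 𝓝 a, ∀ n, u n = b → a < u (n + 1)) :
    Tendsto u atTop (𝓝 ⊤) := by
  have hlim : Tendsto u atTop (𝓝 (⨆ n, u n)) := tendsto_atTop_iSup hu
  suffices hsup : ⨆ n, u n = ⊤ by rwa [hsup] at hlim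
  by_contra hsup
  obtain ⟨n, hn⟩ := (hlim.eventually (h _ hsup)).exists
  exact (hn n rfl).not_ge (le_iSup u (n + 1))

namespace LOB

variable {μ : ℝ} {w : ℝ → ℝ}

theorem wsup_eq_neg_winf_neg (w : ℝ → ℝ) (s t : ℝ) : wsup w s t = -winf (-w) s t := by
  have himage : (-w) '' Icc s t = -(w '' Icc s t) := by
    rw [← image_neg_eq_neg, image_image]; rfl
  rw [winf, himage, Real.sInf_neg, neg_neg, wsup]

theorem Psi_eq_Gam_neg (μ : ℝ) (w : ℝ → ℝ) (s : ℝ) : Psi μ w s = Gam μ (-w) s := by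
  simp only [Psi, Gam, wsup_eq_neg_winf_neg, Pi.neg_apply, neg_eq_iff_eq_neg, neg_add,
    sub_eq_add_neg]

theorem ofReal_le_Gam {s c m : ℝ} (h : ∀ x ∈ Ico s c, dist (w x) m < μ / 2) :
    ENNReal.ofReal c ≤ Gam μ w s := by
  refine le_sInf ?_
  rintro _ ⟨r, hsr, rfl, hr⟩
  refine ENNReal.ofReal_le_ofReal ?_
  by_contra! hrc
  have hinf : m - μ / 2 ≤ winf w s r := by
    refine le_csInf ((nonempty_Icc.2 hsr).image w) (forall_mem_image.2 fun x hx ↦ ?_)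
    linarith [(abs_lt.1 (h x ⟨hx.1, hx.2.trans_lt hrc⟩)).1]
  linarith [(abs_lt.1 (h r ⟨hsr, hrc⟩)).2]

theorem eventually_lt_Gam (hμ : 0 < μ) {a : ℝ≥0∞} (ha : a ≠ ⊤)
    (hw : ContinuousWithinAt w (Ici 0) a.toReal) :
    ∀ᶠ b in 𝓝 a, a < Gam μ w b.toReal := by
  obtain ⟨ε, hε, hclose⟩ := Metric.continuousWithinAt_iff.1 hw (μ / 2) (half_pos hμ)
  have hnear : ∀ᶠ b in 𝓝 a, dist b.toReal a.toReal < ε :=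
    (ENNReal.tendsto_toReal ha).eventually (Metric.ball_mem_nhds _ hε)
  filter_upwards [hnear] with b hb
  calc a < ENNReal.ofReal (a.toReal + ε) :=
        (ENNReal.lt_ofReal_iff_toReal_lt ha).2 (lt_add_of_pos_right _ hε)
    _ ≤ Gam μ w b.toReal := by
        refine ofReal_le_Gam fun x hx ↦ hclose (ENNReal.toReal_nonneg.trans hx.1) ?_
        refine abs_lt.2 ⟨?_, by linarith [hx.2]⟩
        linarith [(abs_lt.1 hb).1, hx.1]

theorem eventually_lt_Psi (hμ : 0 < μ) {a : ℝ≥0∞} (ha : a ≠ ⊤)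
    (hw : ContinuousWithinAt w (Ici 0) a.toReal) :
    ∀ᶠ b in 𝓝 a, a < Psi μ w b.toReal := by
  simpa only [Psi_eq_Gam_neg] using eventually_lt_Gam hμ ha hw.neg

theorem eventually_lt_tauSeq_succ (hμ : 0 < μ) {a : ℝ≥0∞} (ha : a ≠ ⊤)
    (hw : ContinuousWithinAt w (Ici 0) a.toReal) :
    ∀ᶠ b in 𝓝 a, ∀ n, tauSeq μ w n = b → a < tauSeq μ w (n + 1) := by
  filter_upwards [eventually_lt_Gam hμ ha hw, eventually_lt_Psi hμ ha hw]
  rintro _ hΓ hΨ n rfl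
  rw [tauSeq]
  split_ifs
  exacts [ha.lt_top, hΓ, hΨ]

theorem tauSeq_lt_tauSeq_succ (hμ : 0 < μ) {n : ℕ} (hn : tauSeq μ w n ≠ ⊤)
    (hw : ContinuousWithinAt w (Ici 0) (tauSeq μ w n).toReal) :
    tauSeq μ w n < tauSeq μ w (n + 1) :=
  (eventually_lt_tauSeq_succ hμ hn hw).self_of_nhds n rfl

theorem tauSeq_monotone (hμ : 0 < μ) (hw : ContinuousOn w (Ici 0)) : Monotone (tauSeq μ w) := by
  refine monotone_nat_of_le_succ fun n ↦ ?_
  by_cases hn : tauSeq μ w n = ⊤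
  · rw [tauSeq, if_pos hn]
    exact le_top
  · exact (tauSeq_lt_tauSeq_succ hμ hn (hw _ ENNReal.toReal_nonneg)).le

theorem tendsto_tauSeq_nhds_top (hμ : 0 < μ) (hw : ContinuousOn w (Ici 0)) :
    Tendsto (tauSeq μ w) atTop (𝓝 ⊤) :=
  tendsto_nhds_top_of_monotone_of_eventually_lt_succ (tauSeq_monotone hμ hw)
    fun _ ha ↦ eventually_lt_tauSeq_succ hμ ha (hw _ ENNReal.toReal_nonneg)

end LOB

theorem tauSeq_strictMono_and_no_finite_accumulation_general {μ : ℝ} (hμ : 0 < μ) {w : ℝ → ℝ}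
    (hw : ContinuousOn w (Ici 0)) :
    (∀ n : ℕ, tauSeq μ w n < ⊤ → tauSeq μ w n < tauSeq μ w (n + 1)) ∧
    (∀ t : ℝ≥0∞, t < ⊤ → ¬ MapClusterPt t atTop (tauSeq μ w)) := by
  refine ⟨fun n hn ↦ tauSeq_lt_tauSeq_succ hμ hn.ne (hw _ ENNReal.toReal_nonneg), ?_⟩
  intro t ht hcluster
  have hnhds : (𝓝 t ⊓ 𝓝 ⊤).NeBot :=
    NeBot.mono hcluster (inf_le_inf_left _ (tendsto_tauSeq_nhds_top hμ hw))
  exact ht.ne (eq_of_nhds_neBot hnhds)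

/-- The sequence `(τ_n)` is strictly increasing until reaching `∞`, and has no
finite accumulation point. -/
theorem tauSeq_strictMono_and_no_finite_accumulation
    (μ : ℝ) (hμ : 0 < μ) (w : ℝ → ℝ) (hw : Continuous w) (hw0 : w 0 = 0) :
    (∀ n : ℕ, tauSeq μ w n < ⊤ → tauSeq μ w n < tauSeq μ w (n + 1)) ∧
    (∀ t : ℝ≥0∞, t < ⊤ → ¬ MapClusterPt t Filter.atTop (tauSeq μ w)) :=
  tauSeq_strictMono_and_no_finite_accumulation_general hμ hw.continuousOn
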